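/- Let n ≥ 1 be an integer, let α ∈ (0,1), s ∈ (0,1), p > 0, and let Ω ⊂ ℝ^{n+1} be an open convex set. Then there exists a constant C > 0, depending only on n, α, s, and p, such that for every μH[n]-measurable subset E ⊂ ∂Ω with 0 < |E| < ∞ and for μH[n]-a.e. x ∈ E one has |E|^{−sp/n} ≤ C · ( ∫_{∂Ω∖E} |x − y|^{−(n+sp)} dy + H_α(x)^{sp/α} ). -/

import Mathlib

open MeasureTheory Set Filter Metric
open scoped ENNReal NNReal

/-- The truncated integral defining the fractional `α`-mean curvature of `Ω` at `x`. -/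
noncomputable def fracMCIntegral (n : ℕ) (α : ℝ) (Ω : Set (EuclideanSpace ℝ (Fin (n+1))))
    (x : EuclideanSpace ℝ (Fin (n+1))) (ε : ℝ) : ℝ :=
  (α/2) * ∫ y in {y : EuclideanSpace ℝ (Fin (n+1)) | ε < dist y x},
      ((Ωᶜ.indicator (fun _ => (1:ℝ)) y) - (Ω.indicator (fun _ => (1:ℝ)) y))
        * (dist y x) ^ (-((n:ℝ)+1+α)) ∂volume

/-- `h` is the fractional `α`-mean curvature of `Ω` at `x` (principal value limit). -/
def IsFracMeanCurv (n : ℕ) (α : ℝ) (Ω : Set (EuclideanSpace ℝ (Fin (n+1))))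
    (x : EuclideanSpace ℝ (Fin (n+1))) (h : ℝ) : Prop :=
  Filter.Tendsto (fracMCIntegral n α Ω x) (nhdsWithin 0 (Set.Ioi 0)) (nhds h)

/-!
Fix a scale `R` and compare the volume of `Ω ∩ ball x R` with that of the ball. If `Ω` fills at
most a quarter of the ball, pair each `y` with its reflection in `x`: by convexity the two never
both lie in `Ω`, so every shell contributes nonnegatively to the mean curvature, and the excess of
`Ωᶜ` inside the ball gives `R ^ (-α) ≲ H_α(x)`. Otherwise `Ω ∩ ball x R` has volume
`≳ R ^ (n + 1)`; each of its points slides along an outer normal at `x` onto `∂Ω` without leaving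
the ball, so projecting along that normal gives `|∂Ω ∩ ball x R| ≳ R ^ n`. With `R` such that this
lower bound is `2 |E|`, at least `|E|` of that boundary lies outside `E`, and the nonlocal
integral is at least `R ^ (-(n + q)) |E| ≈ R ^ (-q)`, where `q = s p`.
-/

section Projection

theorem inter_frontier_nonempty_of_isPreconnected {X : Type*} [TopologicalSpace X] {S Ω : Set X}
    (hS : IsPreconnected S) (hΩ : IsOpen Ω) (hin : (S ∩ Ω).Nonempty) (hout : (S \ Ω).Nonempty) :
    (S ∩ frontier Ω).Nonempty := by
  by_contra! hempty
  have hcover : S ⊆ Ω ∪ (closure Ω)ᶜ := fun w hw => by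
    by_contra hw'
    rw [mem_union, not_or, notMem_compl_iff] at hw'
    exact eq_empty_iff_forall_notMem.1 hempty w ⟨hw, hΩ.frontier_eq ▸ ⟨hw'.2, hw'.1⟩⟩
  obtain ⟨w, hwS, hwΩ⟩ := hout
  exact hwΩ (hS.subset_left_of_subset_union hΩ isClosed_closure.isOpen_compl
    (disjoint_compl_right.mono_left subset_closure) hcover hin hwS)

theorem exists_norm_eq_one_forall_inner_lt {X : Type*} [NormedAddCommGroup X]
    [InnerProductSpace ℝ X] [CompleteSpace X] {Ω : Set X} (ho : IsOpen Ω) (hc : Convex ℝ Ω)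
    (hne : Ω.Nonempty) {x : X} (hx : x ∉ Ω) :
    ∃ ν : X, ‖ν‖ = 1 ∧ ∀ y ∈ Ω, inner ℝ ν y < inner ℝ ν x := by
  obtain ⟨f, hf⟩ := geometric_hahn_banach_open_point hc ho hx
  set u := (InnerProductSpace.toDual ℝ X).symm f
  have hu : ∀ y, inner ℝ u y = f y := fun y => InnerProductSpace.toDual_symm_apply
  have hu0 : u ≠ 0 := by
    intro h0
    obtain ⟨y, hy⟩ := hne
    simpa [← hu, h0] using hf y hy
  refine ⟨‖u‖⁻¹ • u, norm_smul_inv_norm hu0, fun y hy => ?_⟩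
  simp only [real_inner_smul_left, hu]
  exact mul_lt_mul_of_pos_left (hf y hy) (by positivity)

theorem norm_add_inner_smul_sub_le {X : Type*} [NormedAddCommGroup X] [InnerProductSpace ℝ X]
    {ν : X} (hν : ‖ν‖ = 1) (x y : X) : ‖y + (inner ℝ ν (x - y) : ℝ) • ν - x‖ ≤ ‖y - x‖ := by
  have hinner : inner ℝ (y - x) ν = -inner ℝ ν (x - y) := by
    rw [real_inner_comm, ← inner_neg_right, neg_sub]
  refine (abs_le_of_sq_le_sq' ?_ (norm_nonneg _)).2
  rw [add_sub_right_comm, norm_add_sq_real, real_inner_smul_right, hinner, norm_smul, hν,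
    mul_one, Real.norm_eq_abs, sq_abs]
  nlinarith [sq_nonneg (inner ℝ ν (x - y))]

theorem exists_add_smul_mem_frontier_inter_ball {X : Type*} [NormedAddCommGroup X]
    [InnerProductSpace ℝ X] {Ω : Set X} (ho : IsOpen Ω) {x ν : X} (hν : ‖ν‖ = 1)
    (hsep : ∀ y ∈ Ω, inner ℝ ν y < inner ℝ ν x) {R : ℝ} {y : X} (hy : y ∈ Ω ∩ ball x R) :
    ∃ t : ℝ, y + t • ν ∈ frontier Ω ∩ ball x R := by
  -- `y + t • ν` is the foot of `y` on the supporting hyperplane through `x`.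
  set t : ℝ := inner ℝ ν (x - y) with ht
  have foot_notMem : y + t • ν ∉ Ω := fun hmem => by
    have := hsep _ hmem
    rw [inner_add_right, real_inner_smul_right, real_inner_self_eq_norm_sq, hν, ht,
      inner_sub_right] at this
    linarith
  have foot_mem_ball : y + t • ν ∈ ball x R :=
    mem_ball_iff_norm.2 ((norm_add_inner_smul_sub_le hν x y).trans_lt (mem_ball_iff_norm.1 hy.2))
  obtain ⟨w, hw, hwΩ⟩ := inter_frontier_nonempty_of_isPreconnected
    (convex_segment y (y + t • ν)).isPreconnected ho ⟨y, left_mem_segment ℝ _ _, hy.1⟩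
    ⟨_, right_mem_segment ℝ _ _, foot_notMem⟩
  have hwR : w ∈ ball x R := (convex_ball x R).segment_subset hy.2 foot_mem_ball hw
  obtain ⟨θ, -, rfl⟩ := segment_eq_image' ℝ y (y + t • ν) ▸ hw
  refine ⟨θ * t, ?_⟩
  rw [mul_smul, ← add_sub_cancel_left y (t • ν)]
  exact ⟨hwΩ, hwR⟩

variable {X : Type*} [NormedAddCommGroup X] [InnerProductSpace ℝ X] {n : ℕ}

theorem exists_orthonormalBasis_apply_zero_eq [FiniteDimensional ℝ X]
    (hn : Module.finrank ℝ X = n + 1) {ν : X} (hν : ‖ν‖ = 1) :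
    ∃ b : OrthonormalBasis (Fin (n + 1)) ℝ X, b 0 = ν := by
  have hsing : Orthonormal ℝ (({0} : Set (Fin (n + 1))).domRestrict fun _ => ν) :=
    ⟨fun _ => hν, fun i j hij => absurd (Subsingleton.elim i j) hij⟩
  obtain ⟨b, hb⟩ := hsing.exists_orthonormalBasis_extension_of_card_eq (by simpa using hn)
  exact ⟨b, hb 0 rfl⟩

/-- The orthogonal projection along `b 0`, in the remaining coordinates. The target carries the
sup norm, for which the Hausdorff measure is exactly Lebesgue measure; the projection is still
`1`-Lipschitz. -/
noncomputable def tailCoords (b : OrthonormalBasis (Fin (n + 1)) ℝ X) (y : X) : Fin n → ℝ :=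
  fun i => b.repr y i.succ

theorem tailCoords_add_smul (b : OrthonormalBasis (Fin (n + 1)) ℝ X) (y : X) (t : ℝ) :
    tailCoords b (y + t • b 0) = tailCoords b y := by
  funext i
  simp [tailCoords]

theorem dist_repr_apply_le {ι : Type*} [Fintype ι] (b : OrthonormalBasis ι ℝ X) (y z : X)
    (i : ι) : dist (b.repr y i) (b.repr z i) ≤ dist y z := by
  simpa [← dist_eq_norm] using PiLp.norm_apply_le (b.repr (y - z)) i

theorem lipschitzWith_tailCoords (b : OrthonormalBasis (Fin (n + 1)) ℝ X) :
    LipschitzWith 1 (tailCoords b) :=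
  LipschitzWith.mk_one fun y z =>
    (dist_pi_le_iff dist_nonneg).2 fun i => dist_repr_apply_le b y z i.succ

variable [MeasurableSpace X] [BorelSpace X]

theorem measurePreserving_repr_zero_tailCoords [FiniteDimensional ℝ X]
    (b : OrthonormalBasis (Fin (n + 1)) ℝ X) :
    MeasurePreserving fun y => (b.repr y 0, tailCoords b y) :=
  (volume_preserving_piFinSuccAbove (fun _ : Fin (n + 1) => ℝ) 0).comp
    ((PiLp.volume_preserving_ofLp (Fin (n + 1))).comp b.repr.measurePreserving)

theorem volume_le_mul_hausdorffMeasure_image_tailCoords [FiniteDimensional ℝ X]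
    (b : OrthonormalBasis (Fin (n + 1)) ℝ X) {x : X} {R : ℝ} {A : Set X} (hA : A ⊆ closedBall x R) :
    volume A ≤ ENNReal.ofReal (2 * R) * μH[(n : ℝ)] (tailCoords b '' A) := by
  have hpi : (μH[(n : ℝ)] : Measure (Fin n → ℝ)) = volume := by
    simpa using hausdorffMeasure_pi_real (ι := Fin n)
  have hbox : A ⊆ (fun y => (b.repr y 0, tailCoords b y)) ⁻¹'
      (closedBall (b.repr x 0) R ×ˢ (tailCoords b '' A)) := fun y hy =>
    ⟨(dist_repr_apply_le b y x 0).trans (hA hy), mem_image_of_mem _ hy⟩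
  calc volume A
      ≤ volume (closedBall (b.repr x 0) R ×ˢ (tailCoords b '' A)) :=
        (measure_mono hbox).trans ((measurePreserving_repr_zero_tailCoords b).measure_preimage_le _)
    _ = ENNReal.ofReal (2 * R) * μH[(n : ℝ)] (tailCoords b '' A) := by
        rw [Measure.volume_eq_prod, Measure.prod_prod, Real.volume_closedBall, hpi]

theorem volume_le_mul_hausdorffMeasure_of_forall_exists_add_smul_mem [FiniteDimensional ℝ X]
    (hn : Module.finrank ℝ X = n + 1) {ν : X} (hν : ‖ν‖ = 1) {x : X} {R : ℝ} {A T : Set X}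
    (hA : A ⊆ closedBall x R) (hAT : ∀ y ∈ A, ∃ t : ℝ, y + t • ν ∈ T) :
    volume A ≤ ENNReal.ofReal (2 * R) * μH[(n : ℝ)] T := by
  obtain ⟨b, rfl⟩ := exists_orthonormalBasis_apply_zero_eq hn hν
  have hshadow : tailCoords b '' A ⊆ tailCoords b '' T := by
    rintro _ ⟨y, hy, rfl⟩
    obtain ⟨t, ht⟩ := hAT y hy
    exact ⟨_, ht, tailCoords_add_smul b y t⟩
  have hcontract : μH[(n : ℝ)] (tailCoords b '' T) ≤ μH[(n : ℝ)] T := by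
    simpa using (lipschitzWith_tailCoords b).hausdorffMeasure_image_le n.cast_nonneg T
  calc volume A
      ≤ ENNReal.ofReal (2 * R) * μH[(n : ℝ)] (tailCoords b '' A) :=
        volume_le_mul_hausdorffMeasure_image_tailCoords b hA
    _ ≤ ENNReal.ofReal (2 * R) * μH[(n : ℝ)] T := by
        gcongr
        exact (measure_mono hshadow).trans hcontract

theorem volume_inter_ball_le_mul_hausdorffMeasure_frontier [FiniteDimensional ℝ X]
    (hn : Module.finrank ℝ X = n + 1) {Ω : Set X} (ho : IsOpen Ω) (hc : Convex ℝ Ω) {x : X}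
    (hx : x ∉ Ω) (R : ℝ) :
    volume (Ω ∩ ball x R) ≤ ENNReal.ofReal (2 * R) * μH[(n : ℝ)] (frontier Ω ∩ ball x R) := by
  rcases Ω.eq_empty_or_nonempty with rfl | hne
  · simp
  obtain ⟨ν, hν, hsep⟩ := exists_norm_eq_one_forall_inner_lt ho hc hne hx
  exact volume_le_mul_hausdorffMeasure_of_forall_exists_add_smul_mem hn hν
    (inter_subset_right.trans ball_subset_closedBall) fun y hy =>
      exists_add_smul_mem_frontier_inter_ball ho hν hsep hy

end Projection

section ExteriorSign

/-- The sign `χ_{Ωᶜ} - χ_Ω` integrated against a power of the distance in the fractional mean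
curvature of `Ω`. -/
noncomputable def exteriorSign {X : Type*} (Ω : Set X) (y : X) : ℝ :=
  Ωᶜ.indicator (fun _ => 1) y - Ω.indicator (fun _ => 1) y

theorem exteriorSign_of_mem {X : Type*} {Ω : Set X} {y : X} (hy : y ∈ Ω) :
    exteriorSign Ω y = -1 := by
  simp [exteriorSign, hy]

theorem exteriorSign_of_notMem {X : Type*} {Ω : Set X} {y : X} (hy : y ∉ Ω) :
    exteriorSign Ω y = 1 := by
  simp [exteriorSign, hy]

theorem norm_exteriorSign {X : Type*} (Ω : Set X) (y : X) : ‖exteriorSign Ω y‖ = 1 := by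
  by_cases hy : y ∈ Ω <;> simp [exteriorSign, hy]

theorem exteriorSign_add_pointReflection_nonneg {X : Type*} [AddCommGroup X] [Module ℝ X]
    {Ω : Set X} (hΩ : Convex ℝ Ω) {x : X} (hx : x ∉ Ω) (y : X) :
    0 ≤ exteriorSign Ω y + exteriorSign Ω (Equiv.pointReflection x y) := by
  have reflection_notMem : y ∈ Ω → Equiv.pointReflection x y ∉ Ω := fun hy hy' =>
    hx (midpoint_pointReflection_left (R := ℝ) x y ▸ hΩ.midpoint_mem hy' hy)
  by_cases hy : y ∈ Ω
  · rw [exteriorSign_of_mem hy, exteriorSign_of_notMem (reflection_notMem hy)]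
    norm_num
  · have hge := neg_le_of_abs_le (norm_exteriorSign Ω (Equiv.pointReflection x y)).le
    rw [exteriorSign_of_notMem hy]
    linarith

variable {X : Type*} [MeasurableSpace X] {μ : Measure X} {Ω : Set X}

theorem measurable_exteriorSign (hΩ : MeasurableSet Ω) : Measurable (exteriorSign Ω) :=
  (measurable_const.indicator hΩ.compl).sub (measurable_const.indicator hΩ)

theorem integrable_exteriorSign_mul (hΩ : MeasurableSet Ω) {w : X → ℝ}
    (hw : Integrable w μ) : Integrable (fun y => exteriorSign Ω y * w y) μ :=
  hw.bdd_mul (measurable_exteriorSign hΩ).aestronglyMeasurable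
    (ae_of_all _ fun y => (norm_exteriorSign Ω y).le)

theorem setIntegral_exteriorSign (hΩ : MeasurableSet Ω) {A : Set X} (hA : μ A ≠ ⊤) :
    ∫ y in A, exteriorSign Ω y ∂μ = μ.real A - 2 * μ.real (Ω ∩ A) := by
  have hc : ∀ t : Set X, MeasurableSet t →
      Integrable (t.indicator fun _ => (1 : ℝ)) (μ.restrict A) := fun t ht =>
    (integrableOn_const hA).indicator ht
  have hadd : μ.real (Ω ∩ A) + μ.real (Ωᶜ ∩ A) = μ.real A := by
    rw [inter_comm Ω, inter_comm Ωᶜ, ← sdiff_eq]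
    exact measureReal_inter_add_sdiff hΩ hA
  simp only [exteriorSign]
  rw [integral_sub (hc _ hΩ.compl) (hc _ hΩ), integral_indicator_const _ hΩ.compl,
    integral_indicator_const _ hΩ, measureReal_restrict_apply hΩ,
    measureReal_restrict_apply hΩ.compl, smul_eq_mul, smul_eq_mul]
  linarith

end ExteriorSign

section Symmetrization

variable {X : Type*} [MeasurableSpace X] {μ : Measure X}

theorem integral_mul_nonneg_of_add_comp_nonneg {f : X → X} (hf : MeasurePreserving f μ μ)
    (hfm : MeasurableEmbedding f) {σ w : X → ℝ} (hσ : ∀ y, 0 ≤ σ y + σ (f y))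
    (hw : ∀ y, 0 ≤ w y) (hwf : ∀ y, w (f y) = w y) : 0 ≤ ∫ y, σ y * w y ∂μ := by
  by_cases hint : Integrable (fun y => σ y * w y) μ
  · have hcomp : ∫ y, σ (f y) * w y ∂μ = ∫ y, σ y * w y ∂μ := by
      simpa only [hwf] using hf.integral_comp hfm fun y => σ y * w y
    have hint' : Integrable (fun y => σ (f y) * w y) μ := by
      simpa only [Function.comp_def, hwf] using (hf.integrable_comp_emb hfm).2 hint
    have hsum : 0 ≤ ∫ y, (σ y * w y + σ (f y) * w y) ∂μ :=
      integral_nonneg fun y => by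
        rw [Pi.zero_apply, ← add_mul]
        exact mul_nonneg (hσ y) (hw y)
    rw [integral_add hint hint', hcomp] at hsum
    linarith
  · exact (integral_undef hint).ge

theorem integral_mul_le_integral_mul_of_add_comp_nonneg {f : X → X}
    (hf : MeasurePreserving f μ μ) (hfm : MeasurableEmbedding f) {σ w₁ w₂ : X → ℝ}
    (hσ : ∀ y, 0 ≤ σ y + σ (f y)) (hw : ∀ y, w₁ y ≤ w₂ y) (hw₁ : ∀ y, w₁ (f y) = w₁ y)
    (hw₂ : ∀ y, w₂ (f y) = w₂ y) (hint₁ : Integrable (fun y => σ y * w₁ y) μ)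
    (hint₂ : Integrable (fun y => σ y * w₂ y) μ) :
    ∫ y, σ y * w₁ y ∂μ ≤ ∫ y, σ y * w₂ y ∂μ := by
  have hdiff := integral_mul_nonneg_of_add_comp_nonneg hf hfm hσ
    (w := fun y => w₂ y - w₁ y) (fun y => sub_nonneg.2 (hw y)) fun y => by rw [hw₁, hw₂]
  simp only [mul_sub] at hdiff
  rwa [integral_sub hint₂ hint₁, sub_nonneg] at hdiff

theorem measurePreserving_pointReflection [AddCommGroup X] [MeasurableAdd X] [MeasurableNeg X]
    (μ : Measure X) [μ.IsAddLeftInvariant] [μ.IsNegInvariant] (x : X) :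
    MeasurePreserving (Equiv.pointReflection x) μ μ := by
  have hrefl : ⇑(Equiv.pointReflection x) = fun y => x + x - y := by
    funext y
    simp only [Equiv.pointReflection_apply, vsub_eq_sub, vadd_eq_add]
    abel
  rw [hrefl]
  exact Measure.measurePreserving_sub_left μ (x + x)

end Symmetrization

section TruncatedIntegral

variable {X : Type*} [NormedAddCommGroup X] [NormedSpace ℝ X] [FiniteDimensional ℝ X]
  [MeasurableSpace X] [BorelSpace X] (μ : Measure X) [μ.IsAddHaarMeasure]

theorem integrableOn_dist_rpow_neg {r : ℝ} (hr : (Module.finrank ℝ X : ℝ) < r) (x : X) {ε : ℝ}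
    (hε : 0 < ε) : IntegrableOn (fun y => dist y x ^ (-r)) {y | ε < dist y x} μ := by
  have hdom : Integrable (fun y => (ε / (1 + ε)) ^ (-r) * (1 + ‖y - x‖) ^ (-r)) μ :=
    ((integrable_one_add_norm hr).comp_sub_right x).const_mul _
  have hS : MeasurableSet {y | ε < dist y x} := measurableSet_lt measurable_const (by fun_prop)
  refine hdom.integrableOn.mono' (Measurable.pow_const (by fun_prop) _).aestronglyMeasurable ?_
  filter_upwards [ae_restrict_mem hS] with y (hy : ε < dist y x)
  have hle : ε / (1 + ε) * (1 + dist y x) ≤ dist y x := by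
    rw [div_mul_eq_mul_div, div_le_iff₀ (by positivity)]
    linarith
  rw [Real.norm_of_nonneg (by positivity), ← Real.mul_rpow (by positivity) (by positivity),
    ← dist_eq_norm]
  exact Real.rpow_le_rpow_of_nonpos (by positivity) hle
    (neg_nonpos.2 ((Nat.cast_nonneg _).trans hr.le))

theorem mul_sub_le_setIntegral_exteriorSign_mul {Ω A S : Set X} (hΩ : MeasurableSet Ω)
    (hc : Convex ℝ Ω) {x : X} (hx : x ∉ Ω) (hA : MeasurableSet A) (hS : MeasurableSet S)
    (hAS : A ⊆ S) (hμA : μ A ≠ ⊤) (hAx : ∀ y, Equiv.pointReflection x y ∈ A ↔ y ∈ A)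
    (hSx : ∀ y, Equiv.pointReflection x y ∈ S ↔ y ∈ S) {w : X → ℝ} (hw : IntegrableOn w S μ)
    (hwx : ∀ y, w (Equiv.pointReflection x y) = w y) (hw0 : ∀ y, 0 ≤ w y) {c : ℝ}
    (hcw : ∀ y ∈ A, c ≤ w y) :
    c * (μ.real A - 2 * μ.real (Ω ∩ A)) ≤ ∫ y in S, exteriorSign Ω y * w y ∂μ := by
  have hconst : Integrable (A.indicator fun _ => c) μ :=
    (integrable_indicator_iff hA).2 (integrableOn_const hμA)
  have hle : ∀ y, A.indicator (fun _ => c) y ≤ S.indicator w y :=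
    indicator_le' (fun y hy => by simpa only [indicator_of_mem (hAS hy)] using hcw y hy)
      fun y _ => indicator_nonneg (fun _ _ => hw0 _) y
  calc c * (μ.real A - 2 * μ.real (Ω ∩ A))
      = ∫ y, exteriorSign Ω y * A.indicator (fun _ => c) y ∂μ := by
        simp_rw [← indicator_mul_right]
        rw [integral_indicator hA, integral_mul_const, setIntegral_exteriorSign hΩ hμA, mul_comm]
    _ ≤ ∫ y, exteriorSign Ω y * S.indicator w y ∂μ :=
        integral_mul_le_integral_mul_of_add_comp_nonneg (measurePreserving_pointReflection μ x)
          (AffineIsometryEquiv.pointReflection ℝ x).toHomeomorph.measurableEmbedding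
          (exteriorSign_add_pointReflection_nonneg hc hx) hle
          (fun y => indicator_const_eq_indicator_const (hAx y))
          (fun y => indicator_eq_indicator (hSx y) (hwx y))
          (integrable_exteriorSign_mul hΩ hconst)
          (integrable_exteriorSign_mul hΩ ((integrable_indicator_iff hS).2 hw))
    _ = ∫ y in S, exteriorSign Ω y * w y ∂μ := by
        simp_rw [← indicator_mul_right]
        rw [integral_indicator hS]

theorem mul_sub_le_setIntegral_exteriorSign_mul_dist_rpow {Ω : Set X} (hΩ : MeasurableSet Ω)
    (hc : Convex ℝ Ω) {x : X} (hx : x ∉ Ω) {r : ℝ} (hr : (Module.finrank ℝ X : ℝ) < r) {ε : ℝ}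
    (hε : 0 < ε) (R : ℝ) :
    R ^ (-r) * (μ.real (ball x R \ closedBall x ε) -
        2 * μ.real (Ω ∩ (ball x R \ closedBall x ε))) ≤
      ∫ y in {y | ε < dist y x}, exteriorSign Ω y * dist y x ^ (-r) ∂μ := by
  have hdist : ∀ y, dist (Equiv.pointReflection x y) x = dist y x := fun y => by
    rw [dist_pointReflection_left, dist_comm]
  have hfar : ball x R \ closedBall x ε ⊆ {y | ε < dist y x} := fun y hy =>
    not_le.1 (mem_closedBall.not.1 hy.2)
  refine mul_sub_le_setIntegral_exteriorSign_mul μ hΩ hc hx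
    (measurableSet_ball.diff measurableSet_closedBall)
    (measurableSet_lt measurable_const (by fun_prop)) hfar
    ((measure_mono sdiff_subset).trans_lt measure_ball_lt_top).ne (fun y => ?_) (fun y => ?_)
    (integrableOn_dist_rpow_neg μ hr x hε) (fun y => ?_) (fun y => by positivity) fun y hy => ?_
  · simp only [Set.mem_sdiff, mem_ball, mem_closedBall, hdist]
  · simp only [mem_ofPred_eq, hdist]
  · rw [hdist]
  · exact Real.rpow_le_rpow_of_nonpos (hε.trans (hfar hy)) (mem_ball.1 hy.1).le
      (neg_nonpos.2 ((Nat.cast_nonneg _).trans hr.le))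

end TruncatedIntegral

section Curvature

/-- The volume of the unit ball of `EuclideanSpace ℝ (Fin d)`, the constant relating volumes and
radii. -/
noncomputable def unitBallVolume (d : ℕ) : ℝ :=
  volume.real (ball (0 : EuclideanSpace ℝ (Fin d)) 1)

theorem unitBallVolume_pos (d : ℕ) : 0 < unitBallVolume d :=
  ENNReal.toReal_pos (measure_ball_pos _ _ one_pos).ne' measure_ball_lt_top.ne

theorem volume_real_ball_eq {d : ℕ} (x : EuclideanSpace ℝ (Fin d)) {R : ℝ} (hR : 0 < R) :
    volume.real (ball x R) = unitBallVolume d * R ^ d := by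
  rw [Measure.real, Measure.addHaar_ball_of_pos _ _ hR, ENNReal.toReal_mul,
    ENNReal.toReal_ofReal (by positivity), finrank_euclideanSpace_fin, mul_comm, ← Measure.real,
    unitBallVolume]

variable {n : ℕ} {α : ℝ} {Ω : Set (EuclideanSpace ℝ (Fin (n + 1)))}
  {x : EuclideanSpace ℝ (Fin (n + 1))}

theorem mul_sub_le_fracMCIntegral (hα : 0 < α) (ho : IsOpen Ω) (hc : Convex ℝ Ω) (hx : x ∉ Ω)
    {ε R : ℝ} (hε : 0 < ε) (hR : 0 ≤ R) :
    α / 2 * (R ^ (-((n : ℝ) + 1 + α)) *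
        (volume.real (ball x R) - volume.real (closedBall x ε) - 2 * volume.real (Ω ∩ ball x R))) ≤
      fracMCIntegral n α Ω x ε := by
  have hball : volume.real (ball x R) - volume.real (closedBall x ε) ≤
      volume.real (ball x R \ closedBall x ε) :=
    le_measureReal_sdiff (h := measure_closedBall_lt_top.ne)
  have hinter : volume.real (Ω ∩ (ball x R \ closedBall x ε)) ≤ volume.real (Ω ∩ ball x R) :=
    measureReal_mono (inter_subset_inter_right _ sdiff_subset)
      ((measure_mono inter_subset_right).trans_lt measure_ball_lt_top).ne
  refine mul_le_mul_of_nonneg_left (le_trans ?_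
    (mul_sub_le_setIntegral_exteriorSign_mul_dist_rpow volume ho.measurableSet hc hx
      (r := n + 1 + α) (by simpa using hα) hε R)) (by positivity)
  gcongr

theorem IsFracMeanCurv.mul_sub_le {h : ℝ} (hh : IsFracMeanCurv n α Ω x h) (hα : 0 < α)
    (ho : IsOpen Ω) (hc : Convex ℝ Ω) (hx : x ∉ Ω) {R : ℝ} (hR : 0 ≤ R) :
    α / 2 * (R ^ (-((n : ℝ) + 1 + α)) *
      (volume.real (ball x R) - 2 * volume.real (Ω ∩ ball x R))) ≤ h := by
  have hsmall : Tendsto (fun ε => volume.real (closedBall x ε)) (nhdsWithin 0 (Ioi 0))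
      (nhds 0) := by
    have hpow : Tendsto (fun ε : ℝ => unitBallVolume (n + 1) * ε ^ (n + 1))
        (nhdsWithin 0 (Ioi 0)) (nhds 0) :=
      (Continuous.tendsto' (by fun_prop) 0 0 (by simp)).mono_left nhdsWithin_le_nhds
    refine hpow.congr' ?_
    filter_upwards [self_mem_nhdsWithin] with ε hε
    rw [Measure.addHaar_real_closedBall_eq_addHaar_real_ball, volume_real_ball_eq x hε]
  have hlim := (((tendsto_const_nhds (x := volume.real (ball x R))).sub hsmall).sub_const
    (2 * volume.real (Ω ∩ ball x R))).const_mul (R ^ (-((n : ℝ) + 1 + α))) |>.const_mul (α / 2)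
  rw [sub_zero] at hlim
  refine le_of_tendsto_of_tendsto hlim hh ?_
  filter_upwards [self_mem_nhdsWithin] with ε hε
  exact mul_sub_le_fracMCIntegral hα ho hc hx hε hR

theorem IsFracMeanCurv.mul_rpow_neg_le_or_le_hausdorffMeasure {h : ℝ}
    (hh : IsFracMeanCurv n α Ω x h) (hα : 0 < α) (ho : IsOpen Ω) (hc : Convex ℝ Ω) (hx : x ∉ Ω)
    {R : ℝ} (hR : 0 < R) :
    α * unitBallVolume (n + 1) / 4 * R ^ (-α) ≤ h ∨
      ENNReal.ofReal (unitBallVolume (n + 1) / 8 * R ^ n) ≤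
        μH[(n : ℝ)] (frontier Ω ∩ ball x R) := by
  set v := unitBallVolume (n + 1)
  have hball : volume.real (ball x R) = v * R ^ (n + 1) := volume_real_ball_eq x hR
  rcases le_total (volume.real (Ω ∩ ball x R)) (v / 4 * R ^ (n + 1)) with hsmall | hlarge
  · left
    have hpow : R ^ (-((n : ℝ) + 1 + α)) * R ^ (n + 1) = R ^ (-α) := by
      rw [← Real.rpow_natCast, ← Real.rpow_add hR]
      congr 1
      push_cast
      ring
    calc α * v / 4 * R ^ (-α)
        = α / 2 * (R ^ (-((n : ℝ) + 1 + α)) * (v / 2 * R ^ (n + 1))) := by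
          rw [← hpow]
          ring
      _ ≤ α / 2 * (R ^ (-((n : ℝ) + 1 + α)) *
            (volume.real (ball x R) - 2 * volume.real (Ω ∩ ball x R))) := by
          gcongr
          linarith
      _ ≤ h := hh.mul_sub_le hα ho hc hx hR.le
  · right
    have hvol : ENNReal.ofReal (v / 4 * R ^ (n + 1)) ≤ volume (Ω ∩ ball x R) :=
      ENNReal.ofReal_le_of_le_toReal hlarge
    have hproj := volume_inter_ball_le_mul_hausdorffMeasure_frontier finrank_euclideanSpace_fin
      ho hc hx R
    have hsplit : v / 4 * R ^ (n + 1) = 2 * R * (v / 8 * R ^ n) := by ring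
    rw [hsplit, ENNReal.ofReal_mul (by positivity)] at hvol
    exact (ENNReal.mul_le_mul_iff_right (by simpa using hR) ENNReal.ofReal_ne_top).1
      (hvol.trans hproj)

end Curvature

section Scales

theorem mul_le_setLIntegral_sdiff {X : Type*} [MetricSpace X] [MeasurableSpace X]
    [OpensMeasurableSpace X] {μ : Measure X} {F E : Set X} {x : X} (hx : x ∈ E) (hE : μ E ≠ ⊤)
    {q R : ℝ} (hq : 0 ≤ q) (hEF : 2 * μ E ≤ μ (F ∩ ball x R)) :
    ENNReal.ofReal (R ^ (-q)) * μ E ≤ ∫⁻ y in F \ E, ENNReal.ofReal (dist x y ^ (-q)) ∂μ := by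
  have hremain : μ E ≤ μ ((F ∩ ball x R) \ E) := by
    rw [two_mul] at hEF
    exact (ENNReal.le_sub_of_add_le_left hE hEF).trans le_measure_sdiff
  have hmeas : Measurable fun y => ENNReal.ofReal (dist x y ^ (-q)) :=
    (Measurable.pow_const (by fun_prop) _).ennreal_ofReal
  have hnear : ∀ y ∈ (F ∩ ball x R) \ E,
      ENNReal.ofReal (R ^ (-q)) ≤ ENNReal.ofReal (dist x y ^ (-q)) := fun y hy =>
    ENNReal.ofReal_le_ofReal (Real.rpow_le_rpow_of_nonpos
      (dist_pos.2 (ne_of_mem_of_not_mem hx hy.2)) (mem_ball'.1 hy.1.2).le (neg_nonpos.2 hq))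
  calc ENNReal.ofReal (R ^ (-q)) * μ E
      ≤ ENNReal.ofReal (R ^ (-q)) * μ ((F ∩ ball x R) \ E) := by gcongr
    _ = ∫⁻ _ in (F ∩ ball x R) \ E, ENNReal.ofReal (R ^ (-q)) ∂μ := (setLIntegral_const _ _).symm
    _ ≤ ∫⁻ y in (F ∩ ball x R) \ E, ENNReal.ofReal (dist x y ^ (-q)) ∂μ :=
        setLIntegral_mono hmeas hnear
    _ ≤ ∫⁻ y in F \ E, ENNReal.ofReal (dist x y ^ (-q)) ∂μ :=
        lintegral_mono_set (sdiff_subset_sdiff_left inter_subset_left)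

theorem rpow_neg_le_of_mul_rpow_neg_le {a R h α q : ℝ} (ha : 0 < a) (hR : 0 < R) (hα : 0 < α)
    (hq : 0 ≤ q) (hle : a * R ^ (-α) ≤ h) : R ^ (-q) ≤ a ^ (-(q / α)) * h ^ (q / α) := by
  have hexp : -α * (q / α) = -q := by field_simp
  calc R ^ (-q) = a ^ (-(q / α)) * (a * R ^ (-α)) ^ (q / α) := by
        rw [Real.mul_rpow ha.le (by positivity), ← Real.rpow_mul hR.le, hexp, ← mul_assoc,
          ← Real.rpow_add ha, neg_add_cancel, Real.rpow_zero, one_mul]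
    _ ≤ a ^ (-(q / α)) * h ^ (q / α) := by gcongr

theorem exists_pos_eq_ofReal_mul_pow {a : ℝ≥0∞} (ha0 : a ≠ 0) (ha : a ≠ ⊤) {c : ℝ} (hc : 0 < c)
    {n : ℕ} (hn : n ≠ 0) : ∃ R : ℝ, 0 < R ∧ a = ENNReal.ofReal (c * R ^ n) := by
  have ha' : 0 < a.toReal / c := div_pos (ENNReal.toReal_pos ha0 ha) hc
  refine ⟨(a.toReal / c) ^ (n⁻¹ : ℝ), by positivity, ?_⟩
  rw [Real.rpow_inv_natCast_pow ha'.le hn, mul_div_cancel₀ _ hc.ne', ENNReal.ofReal_toReal ha]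

theorem ofReal_mul_pow_rpow_neg {c R : ℝ} (hc : 0 < c) (hR : 0 < R) {n : ℕ} (hn : n ≠ 0) (q : ℝ) :
    ENNReal.ofReal (c * R ^ n) ^ (-(q / n)) =
      ENNReal.ofReal (c ^ (-(q / n))) * ENNReal.ofReal (R ^ (-q)) := by
  have hexp : (n : ℝ) * -(q / n) = -q := by field_simp
  rw [ENNReal.ofReal_rpow_of_pos (by positivity), Real.mul_rpow hc.le (by positivity),
    ← Real.rpow_natCast, ← Real.rpow_mul hR.le, hexp, ENNReal.ofReal_mul (by positivity)]

variable {n : ℕ} {α q : ℝ} {Ω E : Set (EuclideanSpace ℝ (Fin (n + 1)))}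
  {x : EuclideanSpace ℝ (Fin (n + 1))}

theorem IsFracMeanCurv.ofReal_rpow_neg_le {h R : ℝ} (hh : IsFracMeanCurv n α Ω x h) (hα : 0 < α)
    (hq : 0 ≤ q) (ho : IsOpen Ω) (hc : Convex ℝ Ω) (hx : x ∉ Ω) (hxE : x ∈ E) (hR : 0 < R)
    (hE : μH[(n : ℝ)] E = ENNReal.ofReal (unitBallVolume (n + 1) / 16 * R ^ n)) :
    ENNReal.ofReal (R ^ (-q)) ≤
      ENNReal.ofReal ((unitBallVolume (n + 1) / 16)⁻¹ +
          (α * unitBallVolume (n + 1) / 4) ^ (-(q / α))) *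
        ((∫⁻ y in frontier Ω \ E, ENNReal.ofReal (dist x y ^ (-((n : ℝ) + q))) ∂μH[(n : ℝ)]) +
          ENNReal.ofReal (h ^ (q / α))) := by
  have hv := unitBallVolume_pos (n + 1)
  set v := unitBallVolume (n + 1)
  rcases hh.mul_rpow_neg_le_or_le_hausdorffMeasure hα ho hc hx hR with hcurv | harea
  · calc ENNReal.ofReal (R ^ (-q))
        ≤ ENNReal.ofReal ((α * v / 4) ^ (-(q / α)) * h ^ (q / α)) :=
          ENNReal.ofReal_le_ofReal
            (rpow_neg_le_of_mul_rpow_neg_le (by positivity) hR hα hq hcurv)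
      _ = ENNReal.ofReal ((α * v / 4) ^ (-(q / α))) * ENNReal.ofReal (h ^ (q / α)) :=
          ENNReal.ofReal_mul (by positivity)
      _ ≤ _ := by
          gcongr
          · exact le_add_of_nonneg_left (by positivity)
          · exact le_add_self
  · have hEF : 2 * μH[(n : ℝ)] E ≤ μH[(n : ℝ)] (frontier Ω ∩ ball x R) := by
      have hdouble : 2 * ENNReal.ofReal (v / 16 * R ^ n) = ENNReal.ofReal (v / 8 * R ^ n) := by
        rw [← ENNReal.ofReal_ofNat, ← ENNReal.ofReal_mul zero_le_two]
        ring_nf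
      rwa [hE, hdouble]
    have hcancel : R ^ (-q) = (v / 16)⁻¹ * (R ^ (-((n : ℝ) + q)) * (v / 16 * R ^ n)) := by
      rw [neg_add, Real.rpow_add hR, Real.rpow_neg hR.le n, Real.rpow_natCast]
      field_simp
    calc ENNReal.ofReal (R ^ (-q))
        = ENNReal.ofReal (v / 16)⁻¹ *
            (ENNReal.ofReal (R ^ (-((n : ℝ) + q))) * μH[(n : ℝ)] E) := by
          rw [hE, ← ENNReal.ofReal_mul (by positivity), ← ENNReal.ofReal_mul (by positivity),
            ← hcancel]
      _ ≤ ENNReal.ofReal (v / 16)⁻¹ *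
            ∫⁻ y in frontier Ω \ E, ENNReal.ofReal (dist x y ^ (-((n : ℝ) + q))) ∂μH[(n : ℝ)] := by
          gcongr
          exact mul_le_setLIntegral_sdiff hxE (hE ▸ ENNReal.ofReal_ne_top) (by positivity) hEF
      _ ≤ _ := by
          gcongr
          · exact le_add_of_nonneg_right (by positivity)
          · exact le_self_add

end Scales

theorem pointwise_fractional_michael_simon_convex_general {n : ℕ} (hn : n ≠ 0) {α q : ℝ}
    (hα : 0 < α) (hq : 0 ≤ q) :
    ∃ C : ℝ, 0 < C ∧ ∀ Ω : Set (EuclideanSpace ℝ (Fin (n + 1))), IsOpen Ω → Convex ℝ Ω →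
      ∀ E : Set (EuclideanSpace ℝ (Fin (n + 1))), 0 < μH[(n : ℝ)] E → μH[(n : ℝ)] E < ⊤ →
      ∀ x ∈ E \ Ω, ∀ h : ℝ, IsFracMeanCurv n α Ω x h →
        μH[(n : ℝ)] E ^ (-(q / n)) ≤ ENNReal.ofReal C *
          ((∫⁻ y in frontier Ω \ E, ENNReal.ofReal (dist x y ^ (-((n : ℝ) + q))) ∂μH[(n : ℝ)]) +
            ENNReal.ofReal (h ^ (q / α))) := by
  have hv := unitBallVolume_pos (n + 1)
  set v := unitBallVolume (n + 1)
  refine ⟨(v / 16) ^ (-(q / n)) * ((v / 16)⁻¹ + (α * v / 4) ^ (-(q / α))), by positivity,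
    fun Ω ho hc E hE0 hEtop x hx h hh => ?_⟩
  obtain ⟨R, hR, hER⟩ :=
    exists_pos_eq_ofReal_mul_pow hE0.ne' hEtop.ne (show 0 < v / 16 by positivity) hn
  rw [hER, ofReal_mul_pow_rpow_neg (by positivity) hR hn, ENNReal.ofReal_mul (by positivity),
    mul_assoc]
  gcongr
  exact hh.ofReal_rpow_neg_le hα hq ho hc hx.2 hx.1 hR hER

/-- Key pointwise inequality: for a subset `E` of the boundary of a convex set,
`|E|^{-sp/n} ≤ C (∫_{∂Ω∖E} |x-y|^{-(n+sp)} dy + H_α(x)^{sp/α})` for a.e. `x ∈ E`. -/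
theorem pointwise_fractional_michael_simon_convex
    (n : ℕ) (hn : 1 ≤ n) (α s p : ℝ)
    (hα : α ∈ Set.Ioo (0:ℝ) 1) (hs : s ∈ Set.Ioo (0:ℝ) 1) (hp : 0 < p) :
    ∃ C : ℝ, 0 < C ∧
      ∀ (Ω : Set (EuclideanSpace ℝ (Fin (n+1)))), IsOpen Ω → Convex ℝ Ω →
      ∀ (Hα : EuclideanSpace ℝ (Fin (n+1)) → ℝ), Measurable Hα →
        (∀ x ∈ frontier Ω, 0 ≤ Hα x) →
        (∀ᵐ x ∂(μH[(n:ℝ)].restrict (frontier Ω)), IsFracMeanCurv n α Ω x (Hα x)) →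
      ∀ (E : Set (EuclideanSpace ℝ (Fin (n+1)))), MeasurableSet E → E ⊆ frontier Ω →
        0 < μH[(n:ℝ)] E → μH[(n:ℝ)] E < ⊤ →
        ∀ᵐ x ∂(μH[(n:ℝ)].restrict E),
          (μH[(n:ℝ)] E) ^ (-(s * p / (n:ℝ)))
            ≤ ENNReal.ofReal C *
              ((∫⁻ y in frontier Ω \ E,
                  ENNReal.ofReal (dist x y ^ (-((n:ℝ) + s * p))) ∂μH[(n:ℝ)])
                + ENNReal.ofReal (Hα x ^ (s * p / α))) := by
  obtain ⟨C, hC, hmain⟩ := pointwise_fractional_michael_simon_convex_general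
    (Nat.one_le_iff_ne_zero.1 hn) hα.1 (mul_pos hs.1 hp).le
  refine ⟨C, hC, fun Ω ho hc Hα _ _ hcurv E hE hEΩ hE0 hEtop => ?_⟩
  filter_upwards [ae_restrict_mem hE, ae_restrict_of_ae_restrict_of_subset hEΩ hcurv] with x hx hh
  exact hmain Ω ho hc E hE0 hEtop x ⟨hx, (ho.frontier_eq ▸ hEΩ hx).2⟩ (Hα x) hh
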